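/- arXiv:1502.00301 — 3 statements merged into one kernel-verified Lean document; each statement's English description precedes it below -/
import Mathlib

section
/- Let n, m be positive natural numbers, let B ∈ ℝ^{n×n} and R ∈ ℝ^{m×m} be symmetric positive definite matrices, let H ∈ ℝ^{m×n}, let x^b ∈ ℝ^n and y ∈ ℝ^m. Then the 3D-Var cost function J(x) = (1/2)·(x − x^b)ᵀ B⁻¹ (x − x^b) + (1/2)·(y − H x)ᵀ R⁻¹ (y − H x) attains its unique global minimum over ℝ^n at the point x^a = x^b + B Hᵀ (R + H B Hᵀ)⁻¹ (y − H x^b). -/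
open Matrix

/-- The 3D-Var cost function attains its unique global minimum at
`xᵃ = xᵇ + B Hᵀ (R + H B Hᵀ)⁻¹ (y − H xᵇ)`. -/
theorem threeDVar_unique_min {n m : ℕ} (hn : 0 < n) (hm : 0 < m)
    (B : Matrix (Fin n) (Fin n) ℝ) (R : Matrix (Fin m) (Fin m) ℝ)
    (hB : B.PosDef) (hR : R.PosDef)
    (H : Matrix (Fin m) (Fin n) ℝ) (xb : Fin n → ℝ) (y : Fin m → ℝ)
    (J : (Fin n → ℝ) → ℝ)
    (hJ : ∀ x, J x =
      (1/2) * ((x - xb) ⬝ᵥ (B⁻¹ *ᵥ (x - xb))) +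
      (1/2) * ((y - H *ᵥ x) ⬝ᵥ (R⁻¹ *ᵥ (y - H *ᵥ x))))
    (xa : Fin n → ℝ)
    (hxa : xa = xb + (B * Hᵀ * (R + H * B * Hᵀ)⁻¹) *ᵥ (y - H *ᵥ xb)) :
    ∀ x, x ≠ xa → J xa < J x := by
  intro x hx
  have hS : (R + H * B * Hᵀ).PosDef := by
    refine hR.add_posSemidef ?_
    have := hB.posSemidef.mul_mul_conjTranspose_same H
    rwa [conjTranspose_eq_transpose_of_trivial] at this
  have hBd : IsUnit B.det := (isUnit_iff_isUnit_det _).1 hB.isUnit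
  have hRd : IsUnit R.det := (isUnit_iff_isUnit_det _).1 hR.isUnit
  have hSd : IsUnit (R + H * B * Hᵀ).det := (isUnit_iff_isUnit_det _).1 hS.isUnit
  have symB : (B⁻¹)ᵀ = B⁻¹ := by
    have := hB.inv.isHermitian.eq
    rwa [conjTranspose_eq_transpose_of_trivial] at this
  have symR : (R⁻¹)ᵀ = R⁻¹ := by
    have := hR.inv.isHermitian.eq
    rwa [conjTranspose_eq_transpose_of_trivial] at this
  obtain ⟨w, hw⟩ : ∃ w, w = (R + H * B * Hᵀ)⁻¹ *ᵥ (y - H *ᵥ xb) := ⟨_, rfl⟩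
  have hSw : R *ᵥ w + (H * B * Hᵀ) *ᵥ w = y - H *ᵥ xb := by
    rw [← add_mulVec, hw, mulVec_mulVec, mul_nonsing_inv _ hSd, one_mulVec]
  have hu : xa - xb = (B * Hᵀ) *ᵥ w := by
    rw [hxa, hw, mulVec_mulVec, add_sub_cancel_left]
  have hBu : B⁻¹ *ᵥ (xa - xb) = Hᵀ *ᵥ w := by
    rw [hu, mulVec_mulVec, ← Matrix.mul_assoc, nonsing_inv_mul _ hBd, Matrix.one_mul]
  have hr : y - H *ᵥ xa = R *ᵥ w := by
    have h1 : H *ᵥ xa = H *ᵥ xb + (H * B * Hᵀ) *ᵥ w := by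
      rw [Matrix.mul_assoc, ← mulVec_mulVec, ← hu, mulVec_sub]; abel
    rw [h1, ← sub_sub, ← hSw]; abel
  have hRr : R⁻¹ *ᵥ (y - H *ᵥ xa) = w := by
    rw [hr, mulVec_mulVec, nonsing_inv_mul _ hRd, one_mulVec]
  obtain ⟨e, rfl⟩ : ∃ e, x = xa + e := ⟨x - xa, by abel⟩
  have he : e ≠ 0 := by
    rintro rfl
    simp at hx
  have h1 : xa + e - xb = (xa - xb) + e := by abel
  have h2 : y - H *ᵥ (xa + e) = (y - H *ᵥ xa) - H *ᵥ e := by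
    rw [mulVec_add]; abel
  have c1 : (xa - xb) ⬝ᵥ (B⁻¹ *ᵥ e) = e ⬝ᵥ (Hᵀ *ᵥ w) := by
    rw [dotProduct_mulVec, ← mulVec_transpose, symB, hBu, dotProduct_comm]
  have c2 : (y - H *ᵥ xa) ⬝ᵥ (R⁻¹ *ᵥ (H *ᵥ e)) = e ⬝ᵥ (Hᵀ *ᵥ w) := by
    rw [dotProduct_mulVec, ← mulVec_transpose, symR, hRr, dotProduct_mulVec,
      ← mulVec_transpose, dotProduct_comm]
  have c3 : (H *ᵥ e) ⬝ᵥ w = e ⬝ᵥ (Hᵀ *ᵥ w) := by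
    rw [dotProduct_comm, dotProduct_mulVec, ← mulVec_transpose, dotProduct_comm]
  have p1 : 0 < e ⬝ᵥ (B⁻¹ *ᵥ e) := by
    simpa using hB.inv.dotProduct_mulVec_pos he
  have p2 : 0 ≤ (H *ᵥ e) ⬝ᵥ (R⁻¹ *ᵥ (H *ᵥ e)) := by
    simpa only [star_trivial] using hR.inv.posSemidef.dotProduct_mulVec_nonneg (H *ᵥ e)
  rw [hJ, hJ, h1, h2]
  clear hr h2 h1 hu hJ hxa
  generalize y - H *ᵥ xa = r at *
  generalize xa - xb = u at *
  rw [mulVec_add, mulVec_sub, hBu, hRr]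
  simp only [add_dotProduct, dotProduct_add, sub_dotProduct, dotProduct_sub]
  rw [c1, c2, c3]
  linarith
end

section
/- Let R ∈ ℝ^{m×m} be symmetric positive definite, let v_1, …, v_N ∈ ℝ^m, and let d ∈ ℝ^m. Define Z⁽⁰⁾ = R⁻¹ d ∈ ℝ^m and U⁽⁰⁾ = R⁻¹·[v_1, …, v_N] ∈ ℝ^{m×N}, and for k = 1, …, N define h⁽ᵏ⁾ = (1 + v_kᵀ u_k⁽ᵏ⁻¹⁾)⁻¹ · u_k⁽ᵏ⁻¹⁾, Z⁽ᵏ⁾ = Z⁽ᵏ⁻¹⁾ − h⁽ᵏ⁾·(v_kᵀ Z⁽ᵏ⁻¹⁾), and U⁽ᵏ⁾ = U⁽ᵏ⁻¹⁾ − h⁽ᵏ⁾·(v_kᵀ U⁽ᵏ⁻¹⁾), where u_k⁽ᵏ⁻¹⁾ denotes the k-th column of U⁽ᵏ⁻¹⁾. Then for each k the scalar 1 + v_kᵀ u_k⁽ᵏ⁻¹⁾ is nonzero (indeed positive), the matrix R_k = R + Σ_{j=1}^{k} v_j v_jᵀ is positive definite with Z⁽ᵏ⁾ = R_k⁻¹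 d and U⁽ᵏ⁾ = R_k⁻¹·[v_1, …, v_N], and in particular Z⁽ᴺ⁾ = (R + V Vᵀ)⁻¹ d where V = [v_1, …, v_N]. -/
open Matrix

lemma ismf_pivot {m : ℕ} (A : Matrix (Fin m) (Fin m) ℝ) (hA : A.PosDef) (v : Fin m → ℝ) :
    0 < 1 + v ⬝ᵥ (A⁻¹ *ᵥ v) := by
  have h := hA.inv.posSemidef.dotProduct_mulVec_nonneg v
  simp only [star_trivial] at h
  linarith

lemma ismf_posDef {m : ℕ} (A : Matrix (Fin m) (Fin m) ℝ) (hA : A.PosDef) (v : Fin m → ℝ) :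
    (A + vecMulVec v v).PosDef := by
  have h := posSemidef_vecMulVec_self_star v
  simp only [star_trivial] at h
  exact hA.add_posSemidef h

lemma ismf_step {m : ℕ} (A : Matrix (Fin m) (Fin m) ℝ) (hA : A.PosDef) (v x : Fin m → ℝ) :
    (A + vecMulVec v v)⁻¹ *ᵥ x = A⁻¹ *ᵥ x -
      (v ⬝ᵥ (A⁻¹ *ᵥ x)) • ((1 + v ⬝ᵥ (A⁻¹ *ᵥ v))⁻¹ • (A⁻¹ *ᵥ v)) := by
  have hp := (ismf_pivot A hA v).ne'
  have hB := (isUnit_iff_isUnit_det _).1 (ismf_posDef A hA v).isUnit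
  have hA' := (isUnit_iff_isUnit_det _).1 hA.isUnit
  have key : (A + vecMulVec v v) *ᵥ (A⁻¹ *ᵥ x -
      (v ⬝ᵥ (A⁻¹ *ᵥ x)) • ((1 + v ⬝ᵥ (A⁻¹ *ᵥ v))⁻¹ • (A⁻¹ *ᵥ v))) = x := by
    have hx : A *ᵥ (A⁻¹ *ᵥ x) = x := by
      rw [mulVec_mulVec, mul_nonsing_inv _ hA', one_mulVec]
    have hv : A *ᵥ (A⁻¹ *ᵥ v) = v := by
      rw [mulVec_mulVec, mul_nonsing_inv _ hA', one_mulVec]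
    simp only [mulVec_sub, mulVec_smul, add_mulVec, hx, hv, vecMulVec_mulVec]
    ext i
    simp
    field_simp
    ring
  conv_lhs => rw [← key]
  rw [mulVec_mulVec, nonsing_inv_mul _ hB, one_mulVec]

/-- Correctness of the iterative Sherman–Morrison formula (ISMF): at each step
the pivot `1 + v_kᵀ u_k⁽ᵏ⁻¹⁾` is positive, the intermediate quantities satisfy
`Z⁽ᵏ⁾ = R_k⁻¹ d` and `U⁽ᵏ⁾ = R_k⁻¹ V` with `R_k = R + Σ_{j<k} v_j v_jᵀ`
positive definite, and in particular `Z⁽ᴺ⁾ = (R + V Vᵀ)⁻¹ d`. -/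
theorem ismf_correct {m N : ℕ}
    (R : Matrix (Fin m) (Fin m) ℝ) (hR : R.PosDef)
    (V : Matrix (Fin m) (Fin N) ℝ) (d : Fin m → ℝ)
    (Z : ℕ → Fin m → ℝ) (U : ℕ → Matrix (Fin m) (Fin N) ℝ)
    (hZ0 : Z 0 = R⁻¹ *ᵥ d)
    (hU0 : U 0 = R⁻¹ * V)
    (hrec : ∀ k : Fin N,
      letI v : Fin m → ℝ := fun i => V i k
      letI u : Fin m → ℝ := fun i => U (k : ℕ) i k
      letI h : Fin m → ℝ := (1 + v ⬝ᵥ u)⁻¹ • u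
      Z ((k : ℕ) + 1) = Z (k : ℕ) - (v ⬝ᵥ Z (k : ℕ)) • h ∧
      U ((k : ℕ) + 1) =
        U (k : ℕ) - Matrix.of (fun i j => h i * (v ⬝ᵥ fun l => U (k : ℕ) l j))) :
    (∀ k : Fin N,
      0 < 1 + (fun i => V i k) ⬝ᵥ (fun i => U (k : ℕ) i k)) ∧
    (∀ k ≤ N,
      letI Rk : Matrix (Fin m) (Fin m) ℝ :=
        R + ∑ j ∈ Finset.univ.filter (fun j : Fin N => (j : ℕ) < k),
          vecMulVec (fun i => V i j) (fun i => V i j)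
      Rk.PosDef ∧ Z k = Rk⁻¹ *ᵥ d ∧ U k = Rk⁻¹ * V) ∧
    Z N = (R + V * Vᵀ)⁻¹ *ᵥ d := by
  have main : ∀ k ≤ N,
      (R + ∑ j ∈ Finset.univ.filter (fun j : Fin N => (j : ℕ) < k),
          vecMulVec (fun i => V i j) (fun i => V i j)).PosDef ∧
      Z k = (R + ∑ j ∈ Finset.univ.filter (fun j : Fin N => (j : ℕ) < k),
          vecMulVec (fun i => V i j) (fun i => V i j))⁻¹ *ᵥ d ∧
      U k = (R + ∑ j ∈ Finset.univ.filter (fun j : Fin N => (j : ℕ) < k),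
          vecMulVec (fun i => V i j) (fun i => V i j))⁻¹ * V := by
    intro k
    induction k with
    | zero => intro _; simpa using ⟨hR, hZ0, hU0⟩
    | succ k ih =>
      intro hk
      obtain ⟨hP, hZ, hU⟩ := ih (by omega)
      obtain ⟨rZ, rU⟩ := hrec ⟨k, hk⟩
      have hs : Finset.univ.filter (fun j : Fin N => (j : ℕ) < k + 1) =
          insert ⟨k, hk⟩ (Finset.univ.filter (fun j : Fin N => (j : ℕ) < k)) := by
        ext j
        simp [Fin.ext_iff]
        omega
      rw [hs, Finset.sum_insert (by simp), add_comm (vecMulVec _ _), ← add_assoc]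
      generalize R + ∑ j ∈ Finset.univ.filter (fun j : Fin N => (j : ℕ) < k),
          vecMulVec (fun i => V i j) (fun i => V i j) = A at *
      have col : ∀ (B : Matrix (Fin m) (Fin m) ℝ) (j : Fin N),
          (fun i => (B * V) i j) = B *ᵥ (fun i => V i j) := fun B j => rfl
      refine ⟨ismf_posDef A hP _, ?_, ?_⟩
      · rw [ismf_step A hP]
        simp only [hZ, hU, col] at rZ
        exact rZ
      · simp only [hU, col] at rU
        rw [rU]
        ext i j
        have := congrFun (ismf_step A hP (fun i => V i ⟨k, hk⟩) (fun i => V i j)) i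
        change _ = ((A + vecMulVec _ _)⁻¹ *ᵥ (fun i => V i j)) i
        rw [this]
        change (A⁻¹ *ᵥ (fun i => V i j)) i - _ = _
        simp [mul_comm, mul_left_comm]
  refine ⟨?_, main, ?_⟩
  · intro k
    obtain ⟨hP, -, hU⟩ := main k k.2.le
    rw [hU]
    exact ismf_pivot _ hP (fun i => V i k)
  · obtain ⟨-, hZ, -⟩ := main N le_rfl
    have hVV : V * Vᵀ = ∑ j ∈ Finset.univ.filter (fun j : Fin N => (j : ℕ) < N),
          vecMulVec (fun i => V i j) (fun i => V i j) := by
      ext a b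
      simp [Matrix.mul_apply, Matrix.sum_apply, vecMulVec_apply]
    rw [hVV]
    exact hZ
end

section
/- Let R ∈ ℝ^{m×m} be symmetric positive definite, S ∈ ℝ^{n×N}, H ∈ ℝ^{m×n}, and set V = H·S and P^b = S Sᵀ. Then there exists a symmetric positive semidefinite matrix Γ ∈ ℝ^{N×N} with Γ·Γ = I_N − Vᵀ (R + V Vᵀ)⁻¹ V, and any such Γ satisfies (S·Γ)·(S·Γ)ᵀ = P^b − P^b Hᵀ (R + H P^b Hᵀ)⁻¹ H P^b. -/
open Matrix

open scoped MatrixOrder in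
theorem psd_sqrt_aux {N : ℕ} (M : Matrix (Fin N) (Fin N) ℝ) (hM : M.PosSemidef) :
    ∃ G : Matrix (Fin N) (Fin N) ℝ, G.PosSemidef ∧ G * G = M :=
  ⟨CFC.sqrt M, (CFC.sqrt_nonneg M).posSemidef, CFC.sqrt_mul_sqrt_self M hM.nonneg⟩

theorem psd_aux {m N : ℕ} (R : Matrix (Fin m) (Fin m) ℝ) (hR : R.PosDef)
    (V : Matrix (Fin m) (Fin N) ℝ) :
    ((1 : Matrix (Fin N) (Fin N) ℝ) - Vᵀ * (R + V * Vᵀ)⁻¹ * V).PosSemidef := by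
  have hVV : (V * Vᵀ).PosSemidef := by
    simpa using Matrix.posSemidef_self_mul_conjTranspose V
  have hA : (R + V * Vᵀ).PosDef := hR.add_posSemidef hVV
  have hu : IsUnit (R + V * Vᵀ).det := (Matrix.isUnit_iff_isUnit_det _).1 hA.isUnit
  have hKt : ((R + V * Vᵀ)⁻¹)ᵀ = (R + V * Vᵀ)⁻¹ := by
    simpa using hA.inv.isHermitian.eq
  have hKA : (R + V * Vᵀ)⁻¹ * (R + V * Vᵀ) = 1 := Matrix.nonsing_inv_mul _ hu
  generalize (R + V * Vᵀ)⁻¹ = K at *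
  have hkey : K * V * Vᵀ * K = K - K * R * K := by
    have h : K * (R + V * Vᵀ) * K = K := by rw [hKA, one_mul]
    rw [mul_add, add_mul] at h
    rw [eq_sub_iff_add_eq, add_comm]
    simpa only [Matrix.mul_assoc] using h
  have hMt : (1 - Vᵀ * K * V)ᵀ = 1 - Vᵀ * K * V := by
    simp [Matrix.transpose_sub, Matrix.transpose_mul, hKt, Matrix.mul_assoc]
  have h1 : ((1 - Vᵀ * K * V) * (1 - Vᵀ * K * V)).PosSemidef := by
    have := Matrix.posSemidef_conjTranspose_mul_self (1 - Vᵀ * K * V)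
    rwa [Matrix.conjTranspose_eq_transpose_of_trivial, hMt] at this
  have h2 : ((K * V)ᵀ * R * (K * V)).PosSemidef := by
    simpa using hR.posSemidef.conjTranspose_mul_mul_same (K * V)
  have heq : (1 - Vᵀ * K * V) =
      (1 - Vᵀ * K * V) * (1 - Vᵀ * K * V) + (K * V)ᵀ * R * (K * V) := by
    have e : Vᵀ * K * V * (Vᵀ * K * V) = Vᵀ * K * V - (K * V)ᵀ * R * (K * V) := by
      calc Vᵀ * K * V * (Vᵀ * K * V) = Vᵀ * (K * V * Vᵀ * K) * V := by
            simp only [Matrix.mul_assoc]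
        _ = _ := by
            rw [hkey, Matrix.transpose_mul, hKt]
            simp only [Matrix.mul_sub, Matrix.sub_mul, Matrix.mul_assoc]
    rw [sub_mul, mul_sub, mul_sub, e]
    simp only [one_mul, mul_one]
    abel
  rw [heq]
  exact h1.add h2

/-- There exists a symmetric positive semidefinite square root `Γ` of
`I − Vᵀ (R + V Vᵀ)⁻¹ V`, and any such `Γ` yields analysis deviations `S Γ`
whose covariance equals the Kalman-filter analysis covariance. -/
theorem ensrf_sqrt_exists_and_covariance {n m N : ℕ}
    (R : Matrix (Fin m) (Fin m) ℝ) (hR : R.PosDef)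
    (S : Matrix (Fin n) (Fin N) ℝ)
    (H : Matrix (Fin m) (Fin n) ℝ)
    (V : Matrix (Fin m) (Fin N) ℝ) (hV : V = H * S)
    (Pb : Matrix (Fin n) (Fin n) ℝ) (hPb : Pb = S * Sᵀ) :
    (∃ G : Matrix (Fin N) (Fin N) ℝ, G.PosSemidef ∧
      G * G = (1 : Matrix (Fin N) (Fin N) ℝ) - Vᵀ * (R + V * Vᵀ)⁻¹ * V) ∧
    ∀ G : Matrix (Fin N) (Fin N) ℝ, G.PosSemidef →
      G * G = (1 : Matrix (Fin N) (Fin N) ℝ) - Vᵀ * (R + V * Vᵀ)⁻¹ * V →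
      (S * G) * (S * G)ᵀ =
        Pb - Pb * Hᵀ * (R + H * Pb * Hᵀ)⁻¹ * H * Pb := by
  refine ⟨psd_sqrt_aux _ (psd_aux R hR V), fun G hG h => ?_⟩
  have hGt : Gᵀ = G := by simpa using hG.isHermitian.eq
  have e1 : (S * G) * (S * G)ᵀ = S * (G * G) * Sᵀ := by
    rw [Matrix.transpose_mul, hGt]
    simp only [Matrix.mul_assoc]
  have e2 : H * Pb * Hᵀ = V * Vᵀ := by
    rw [hV, hPb, Matrix.transpose_mul]
    simp only [Matrix.mul_assoc]
  rw [e1, h, e2]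
  generalize (R + V * Vᵀ)⁻¹ = K
  subst hV hPb
  simp only [Matrix.transpose_mul, Matrix.mul_sub, Matrix.sub_mul, Matrix.mul_one,
    Matrix.mul_assoc]
end
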